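/- arXiv:2410.23284 — 4 statements merged into one kernel-verified Lean document; each statement's English description precedes it below -/
import Mathlib

section
/- Let A and B be n×n Hermitian positive definite complex matrices. Then ‖log(A) − log(B)‖ ≤ max(‖A^{−1}‖, ‖B^{−1}‖) · ‖A − B‖, where ‖·‖ is the operator norm. -/
/-!
The bound follows from operator monotonicity of the logarithm. Put `δ = ‖A - B‖` and let `M` be the
larger of `‖A⁻¹‖` and `‖B⁻¹‖`. Then `1 ≤ M B`, so `A ≤ B + δ ≤ (1 + M δ) B`. Taking logarithms,
`log A ≤ log B + log (1 + M δ) ≤ log B + M δ`, and exchanging `A` and `B` gives the reverse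
inequality. A self-adjoint element lying between `-M δ` and `M δ` has norm at most `M δ`. The
argument works in any unital C⋆-algebra, and matrices with the `ℓ²` operator norm are one.
-/


open Matrix
open scoped ComplexOrder

variable {n : Type*} [Fintype n] [DecidableEq n]

/-- The matrix logarithm of a (positive definite) matrix, via the functional calculus. -/
noncomputable def matLog (A : Matrix n n ℂ) : Matrix n n ℂ := cfc Real.log A

/-- The matrix square root of a (positive semidefinite) matrix, via the functional calculus. -/
noncomputable def matSqrt (A : Matrix n n ℂ) : Matrix n n ℂ := cfc Real.sqrt A

/-- The inverse square root `A^{-1/2}` of a (positive definite) matrix,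
via the functional calculus. -/
noncomputable def matInvSqrt (A : Matrix n n ℂ) : Matrix n n ℂ :=
  cfc (fun x : ℝ => (Real.sqrt x)⁻¹) A

/-- The `ℓ² → ℓ²` operator norm of a matrix. -/
noncomputable def opNorm (A : Matrix n n ℂ) : ℝ := ‖Matrix.toEuclideanCLM (𝕜 := ℂ) A‖

/-- The commutator `[x, y] = xy - yx`. -/
noncomputable def com (x y : Matrix n n ℂ) : Matrix n n ℂ := x * y - y * x

/-- The GNS norm `‖a‖_ρ = Tr(ρ a† a)^{1/2}` associated to a state `ρ`. -/
noncomputable def gnsNorm (ρ a : Matrix n n ℂ) : ℝ := Real.sqrt ((ρ * aᴴ * a).trace.re)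

section CStar

variable {𝒜 : Type*} [CStarAlgebra 𝒜] [PartialOrder 𝒜] [StarOrderedRing 𝒜]

/-- The lower bound `M⁻¹ ≤ b` for positive invertible `b`, in the form `1 ≤ M b`: on the spectrum of
`b` it reads `x⁻¹ ≤ M`, and `x⁻¹` lies in the spectrum of `b⁻¹`. -/
lemma one_le_smul_of_norm_inv_le (b : 𝒜ˣ) (hb : 0 ≤ (b : 𝒜)) {M : ℝ}
    (hM : ‖(↑b⁻¹ : 𝒜)‖ ≤ M) : (1 : 𝒜) ≤ M • (b : 𝒜) := by
  have hbi : 0 ≤ (↑b⁻¹ : 𝒜) := CFC.inv_nonneg_of_nonneg b hb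
  have h1 : ∀ x ∈ spectrum ℝ (↑b⁻¹ : 𝒜), x ≤ ‖(↑b⁻¹ : 𝒜)‖ :=
    (le_algebraMap_iff_spectrum_le (IsSelfAdjoint.of_nonneg hbi)).1
      (IsSelfAdjoint.of_nonneg hbi).le_algebraMap_norm_self
  have h2 : cfc (fun _ : ℝ => (1 : ℝ)) (b : 𝒜) ≤ cfc (fun x : ℝ => M • x) (b : 𝒜) := by
    refine cfc_mono fun x hx => ?_
    have hx0 : x ≠ 0 := spectrum.ne_zero_of_mem_of_unit hx
    have hxpos : 0 < x := lt_of_le_of_ne (spectrum_nonneg_of_nonneg hb hx) hx0.symm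
    have hx' : x⁻¹ ∈ spectrum ℝ (↑b⁻¹ : 𝒜) :=
      (spectrum.inv_mem_iff (r := Units.mk0 x hx0) (a := b)).1 hx
    have := (h1 _ hx').trans hM
    simpa [smul_eq_mul] using (inv_le_iff_one_le_mul₀ hxpos).1 this
  rwa [cfc_const_one ℝ (b : 𝒜), cfc_smul_id M (b : 𝒜)] at h2

/-- The one-sided bound: monotonicity of the logarithm applied to `a ≤ (1 + M ‖a - b‖) b`. -/
lemma log_le_log_add (a b : 𝒜ˣ) (ha : 0 ≤ (a : 𝒜)) (hb : 0 ≤ (b : 𝒜)) {M : ℝ}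
    (hM : ‖(↑b⁻¹ : 𝒜)‖ ≤ M) :
    CFC.log (a : 𝒜) - CFC.log (b : 𝒜) ≤ algebraMap ℝ 𝒜 (M * ‖(a : 𝒜) - b‖) := by
  set δ := ‖(a : 𝒜) - b‖
  have hδ : 0 ≤ δ := norm_nonneg _
  have hM0 : 0 ≤ M := (norm_nonneg _).trans hM
  have hr : 0 < 1 + M * δ := by positivity
  have hab : (a : 𝒜) ≤ (1 + M * δ) • (b : 𝒜) := by
    have h1 : (a : 𝒜) - b ≤ algebraMap ℝ 𝒜 δ :=
      ((IsSelfAdjoint.of_nonneg ha).sub (IsSelfAdjoint.of_nonneg hb)).le_algebraMap_norm_self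
    have h2 : algebraMap ℝ 𝒜 δ ≤ (M * δ) • (b : 𝒜) := by
      rw [Algebra.algebraMap_eq_smul_one, mul_comm, mul_smul]
      exact smul_le_smul_of_nonneg_left (one_le_smul_of_norm_inv_le b hb hM) hδ
    rw [add_smul, one_smul]
    exact sub_le_iff_le_add'.1 (h1.trans h2)
  have h3 := CFC.log_le_log hab (Units.isStrictlyPositive_iff.2 ha)
  rw [CFC.log_smul' _ hr (Units.isStrictlyPositive_iff.2 hb)] at h3
  refine (sub_le_iff_le_add.2 h3).trans (algebraMap_mono 𝒜 ?_)
  linarith [Real.log_le_sub_one_of_pos hr]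

lemma norm_log_sub_log_le (a b : 𝒜ˣ) (ha : 0 ≤ (a : 𝒜)) (hb : 0 ≤ (b : 𝒜)) :
    ‖CFC.log (a : 𝒜) - CFC.log (b : 𝒜)‖ ≤
      max ‖(↑a⁻¹ : 𝒜)‖ ‖(↑b⁻¹ : 𝒜)‖ * ‖(a : 𝒜) - b‖ := by
  set M := max ‖(↑a⁻¹ : 𝒜)‖ ‖(↑b⁻¹ : 𝒜)‖
  set x := CFC.log (a : 𝒜) - CFC.log (b : 𝒜) with hx
  have hc : 0 ≤ M * ‖(a : 𝒜) - b‖ :=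
    mul_nonneg ((norm_nonneg _).trans (le_max_left _ _)) (norm_nonneg _)
  have hsa : IsSelfAdjoint x := IsSelfAdjoint.log.sub IsSelfAdjoint.log
  have hup : x ≤ algebraMap ℝ 𝒜 (M * ‖(a : 𝒜) - b‖) :=
    log_le_log_add a b ha hb (le_max_right _ _)
  have hlo : algebraMap ℝ 𝒜 (-(M * ‖(a : 𝒜) - b‖)) ≤ x := by
    have := log_le_log_add b a hb ha (le_max_left ‖(↑a⁻¹ : 𝒜)‖ ‖(↑b⁻¹ : 𝒜)‖)
    rw [norm_sub_rev] at this
    rw [map_neg, hx, ← neg_sub (CFC.log (b : 𝒜))]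
    exact neg_le_neg this
  rw [le_algebraMap_iff_spectrum_le hsa] at hup
  rw [algebraMap_le_iff_le_spectrum hsa] at hlo
  rw [← cfc_id ℝ x]
  exact norm_cfc_le hc fun t ht => abs_le.2 ⟨hlo t ht, hup t ht⟩

end CStar

/-- **Continuity bound for the matrix logarithm.** For Hermitian positive definite `A, B`:
`‖log(A) − log(B)‖ ≤ max(‖A⁻¹‖, ‖B⁻¹‖) · ‖A − B‖`. -/
theorem log_continuity
    (N : ℕ) (A B : Matrix (Fin N) (Fin N) ℂ) (hA : A.PosDef) (hB : B.PosDef) :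
    opNorm (matLog A - matLog B) ≤ max (opNorm A⁻¹) (opNorm B⁻¹) * opNorm (A - B) := by
  obtain ⟨a, rfl⟩ := hA.isUnit
  obtain ⟨b, rfl⟩ := hB.isUnit
  open scoped MatrixOrder Matrix.Norms.L2Operator in
  have h := norm_log_sub_log_le a b hA.posSemidef.nonneg hB.posSemidef.nonneg
  rw [Matrix.coe_units_inv, Matrix.coe_units_inv] at h
  exact h
end

section
/- Let ρ be a d×d Hermitian positive definite complex matrix and let h be a Hermitian d×d matrix. Then the following are equivalent: (i) Tr(ρ a† [h, b]) = Tr(ρ [h, a]† b) for all d×d matrices a, b (i.e., the map a ↦ [h, a] is self-adjoint with respect to the GNS inner product ⟨a, b⟩_ρ := Tr(ρ a† b)); (ii) hρ = ρh. -/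
/-! The cyclicity of the trace and `hᴴ = h` give `⟨a, [h, b]⟩_ρ - ⟨[h, a], b⟩_ρ = Tr([ρ, h] a† b)`
for all `a`, `b`. Hence `[ρ, h] = 0` implies self-adjointness; conversely, with `a = 1`, the
nondegeneracy of the trace pairing forces `[ρ, h] = 0`. -/

open Matrix
open scoped ComplexOrder

variable {n : Type*} [Fintype n] [DecidableEq n]

/-- **Self-adjointness of the GNS Hamiltonian ↔ symmetry.** For a positive definite `ρ` and
Hermitian `h`, the map `a ↦ [h,a]` is self-adjoint for the GNS inner product
`⟨a,b⟩_ρ = Tr(ρ a† b)` if and only if `hρ = ρh`. -/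
theorem gns_hamiltonian_selfAdjoint_iff_commute
    (d : ℕ) (ρ h : Matrix (Fin d) (Fin d) ℂ)
    (hρ : ρ.PosDef) (hh : h.IsHermitian) :
    (∀ a b : Matrix (Fin d) (Fin d) ℂ,
        (ρ * aᴴ * com h b).trace = (ρ * (com h a)ᴴ * b).trace) ↔ h * ρ = ρ * h := by
  have key : ∀ a b : Matrix (Fin d) (Fin d) ℂ,
      (ρ * aᴴ * com h b).trace - (ρ * (com h a)ᴴ * b).trace
        = ((ρ * h - h * ρ) * (aᴴ * b)).trace := by
    intro a b
    have hcyc : (ρ * aᴴ * b * h).trace = (h * ρ * aᴴ * b).trace := by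
      rw [Matrix.trace_mul_comm]
      simp only [Matrix.mul_assoc]
    simp only [com, Matrix.conjTranspose_sub, Matrix.conjTranspose_mul, hh.eq, Matrix.mul_sub,
      Matrix.sub_mul, Matrix.trace_sub, ← Matrix.mul_assoc, hcyc]
    ring
  constructor
  · intro H
    have hzero : ρ * h - h * ρ = 0 := by
      refine Matrix.ext_iff_trace_mul_right.mpr fun b => ?_
      -- The choice `a = 1` already leaves `b` arbitrary in the trace pairing.
      have hb := key 1 b
      rw [H 1 b, sub_self, Matrix.conjTranspose_one, Matrix.one_mul] at hb
      rw [← hb, Matrix.zero_mul, Matrix.trace_zero]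
    exact (sub_eq_zero.mp hzero).symm
  · intro hc a b
    have hab := key a b
    rw [hc, sub_self, Matrix.zero_mul, Matrix.trace_zero] at hab
    exact sub_eq_zero.mp hab
end

section
/- Let ρ be a d×d Hermitian positive definite complex matrix with Tr(ρ) = 1, and let h' and a be d×d complex matrices with h' Hermitian. Then Tr(ρ (ρ^{1/2} a ρ^{−1/2})† [h', ρ^{−1/2} a ρ^{1/2}]) − Tr(ρ a† [h', a]) = Tr(ρ (a ρ a† ρ^{−1} − a† a)† (ρ^{1/2} h' ρ^{−1/2} − h')). -/
/-!
Write `s = ρ^{1/2}` and `t = ρ^{-1/2}`. These are Hermitian with `s * s = ρ` and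
`s * t = t * s = 1`, by the functional calculus on the positive spectrum of `ρ`. The adjoints
become `(s a t)ᴴ = t aᴴ s` and `(a ρ aᴴ ρ⁻¹ - aᴴ a)ᴴ = ρ⁻¹ a ρ aᴴ - aᴴ a`; once `s t` and
`ρ ρ⁻¹` are cancelled, both sides expand into four traces that agree in pairs by cyclicity.
-/

open Matrix
open scoped ComplexOrder

variable {n : Type*} [Fintype n] [DecidableEq n]

lemma spectrum_pos_of_posDef {ρ : Matrix n n ℂ} (hρ : ρ.PosDef) {x : ℝ}
    (hx : x ∈ spectrum ℝ ρ) : 0 < x := by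
  rw [hρ.isHermitian.spectrum_real_eq_range_eigenvalues] at hx
  obtain ⟨i, rfl⟩ := hx
  exact hρ.eigenvalues_pos i

lemma matSqrt_isHermitian (ρ : Matrix n n ℂ) : (matSqrt ρ).IsHermitian :=
  cfc_predicate Real.sqrt ρ

lemma matInvSqrt_isHermitian (ρ : Matrix n n ℂ) : (matInvSqrt ρ).IsHermitian :=
  cfc_predicate (fun x : ℝ => (Real.sqrt x)⁻¹) ρ

lemma matSqrt_mul_self {ρ : Matrix n n ℂ} (hρ : ρ.PosDef) : matSqrt ρ * matSqrt ρ = ρ := by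
  have hsa : IsSelfAdjoint ρ := hρ.isHermitian
  unfold matSqrt
  rw [← cfc_mul Real.sqrt Real.sqrt ρ Real.continuous_sqrt.continuousOn
    Real.continuous_sqrt.continuousOn]
  conv_rhs => rw [← cfc_id ℝ ρ hsa]
  exact cfc_congr fun x hx => Real.mul_self_sqrt (spectrum_pos_of_posDef hρ hx).le

lemma matSqrt_mul_matInvSqrt {ρ : Matrix n n ℂ} (hρ : ρ.PosDef) :
    matSqrt ρ * matInvSqrt ρ = 1 := by
  have hsa : IsSelfAdjoint ρ := hρ.isHermitian
  have hne : ∀ x ∈ spectrum ℝ ρ, Real.sqrt x ≠ 0 := fun x hx =>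
    (Real.sqrt_pos.2 (spectrum_pos_of_posDef hρ hx)).ne'
  unfold matSqrt matInvSqrt
  rw [← cfc_mul Real.sqrt (fun x : ℝ => (Real.sqrt x)⁻¹) ρ Real.continuous_sqrt.continuousOn
    (Real.continuous_sqrt.continuousOn.inv₀ hne), ← cfc_one ℝ ρ hsa]
  exact cfc_congr fun x hx => mul_inv_cancel₀ (hne x hx)

/-- **Modular defect trace identity.** For a positive definite state `ρ` (trace one),
Hermitian `h'` and any `a`:
`Tr(ρ (ρ^{1/2} a ρ^{-1/2})† [h', ρ^{-1/2} a ρ^{1/2}]) − Tr(ρ a† [h', a])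
  = Tr(ρ (a ρ a† ρ⁻¹ − a† a)† (ρ^{1/2} h' ρ^{-1/2} − h'))`. -/
theorem modular_defect_trace_identity
    (d : ℕ) (ρ : Matrix (Fin d) (Fin d) ℂ) (hρ : ρ.PosDef) (htr : ρ.trace = 1)
    (h' a : Matrix (Fin d) (Fin d) ℂ) (hh' : h'.IsHermitian) :
    (ρ * (matSqrt ρ * a * matInvSqrt ρ)ᴴ * com h' (matInvSqrt ρ * a * matSqrt ρ)).trace -
        (ρ * aᴴ * com h' a).trace =
      (ρ * (a * ρ * aᴴ * ρ⁻¹ - aᴴ * a)ᴴ * (matSqrt ρ * h' * matInvSqrt ρ - h')).trace := by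
  have hs := (matSqrt_isHermitian ρ).eq
  have ht := (matInvSqrt_isHermitian ρ).eq
  have hss := matSqrt_mul_self hρ
  have hst := matSqrt_mul_matInvSqrt hρ
  have hts := mul_eq_one_comm.1 hst
  generalize matSqrt ρ = s at *
  generalize matInvSqrt ρ = t at *
  have hinv : ρ * ρ⁻¹ = 1 := mul_nonsing_inv ρ ((isUnit_iff_isUnit_det ρ).1 hρ.isUnit)
  have hρt : ρ * t = s := by rw [← hss, mul_assoc, hst, mul_one]
  have htρ : t * ρ = s := by rw [← hss, ← mul_assoc, hts, one_mul]
  -- Powers of `ρ` are split and moved so that `c1`, `c2`, `c3` are single cyclic rotations.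
  have e1 : ρ * (s * a * t)ᴴ * com h' (t * a * s) =
      s * (aᴴ * s * h' * t * a * s) - s * aᴴ * a * s * h' := by
    calc _ = (ρ * t) * aᴴ * s * h' * t * a * s - (ρ * t) * aᴴ * (s * t) * a * s * h' := by
          simp only [com, conjTranspose_mul, hs, ht]; noncomm_ring
      _ = _ := by rw [hρt, hst]; noncomm_ring
  have e2 : ρ * (a * ρ * aᴴ * ρ⁻¹ - aᴴ * a)ᴴ * (s * h' * t - h') =
      a * ρ * (aᴴ * s * h' * t) - a * (ρ * aᴴ * h') - (ρ * aᴴ * a * s * h') * t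
        + ρ * aᴴ * a * h' := by
    calc _ = (ρ * ρ⁻¹) * a * ρ * aᴴ * (s * h' * t - h') - ρ * aᴴ * a * (s * h' * t - h') := by
          simp only [conjTranspose_sub, conjTranspose_mul, conjTranspose_conjTranspose,
            hρ.isHermitian.eq, hρ.isHermitian.inv.eq]
          noncomm_ring
      _ = _ := by rw [hinv]; noncomm_ring
  have c1 : (s * (aᴴ * s * h' * t * a * s)).trace = (a * ρ * (aᴴ * s * h' * t)).trace := by
    rw [trace_mul_comm s, trace_mul_comm (a * ρ), ← hss]
    simp only [mul_assoc]
  have c2 : ((ρ * aᴴ * a * s * h') * t).trace = (s * aᴴ * a * s * h').trace := by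
    rw [trace_mul_comm]
    simp only [← mul_assoc, htρ]
  have c3 : (ρ * aᴴ * com h' a).trace = (a * (ρ * aᴴ * h')).trace - (ρ * aᴴ * a * h').trace := by
    rw [trace_mul_comm a, ← trace_sub]
    simp only [com, mul_sub, mul_assoc]
  rw [e1, e2, c3, trace_add, trace_sub, trace_sub, trace_sub, c1, c2]
  ring
end

section
/- For every real number x, (e^{x/2} − 1)² ≤ x·(e^x − 1)/4. -/
/-!
With `u = x / 2`, the difference of the two sides is `(e^u - 1) * g u / 2`, where
`g u = (u - 2) e^u + u + 2`. Since `g' u = (u - 1) e^u + 1 = e^u (e^{-u} - (1 - u)) ≥ 0`, the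
function `g` is monotone (`monotone_sub_two_mul_exp`); as `g 0 = 0`, the two factors have the
same sign.
-/

theorem monotone_sub_two_mul_exp :
    Monotone fun u : ℝ => (u - 2) * Real.exp u + u + 2 := by
  have hd (u : ℝ) : HasDerivAt (fun u : ℝ => (u - 2) * Real.exp u + u + 2)
      (1 * Real.exp u + (u - 2) * Real.exp u + 1) u :=
    (((((hasDerivAt_id u).sub_const 2).mul (Real.hasDerivAt_exp u)).add
      (hasDerivAt_id u)).add_const 2)
  refine monotone_of_deriv_nonneg (fun u => (hd u).differentiableAt) fun u => ?_
  rw [(hd u).deriv]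
  have h1 : -u + 1 ≤ Real.exp (-u) := Real.add_one_le_exp (-u)
  have h2 : Real.exp (-u) * Real.exp u = 1 := by rw [← Real.exp_add]; simp
  nlinarith [mul_le_mul_of_nonneg_right h1 (Real.exp_pos u).le]

/-- For every real `x`, `(e^{x/2} − 1)² ≤ x (e^x − 1) / 4`. -/
theorem exp_half_sub_one_sq_le (x : ℝ) :
    (Real.exp (x / 2) - 1) ^ 2 ≤ x * (Real.exp x - 1) / 4 := by
  obtain ⟨u, rfl⟩ : ∃ u, x = u + u := ⟨x / 2, by ring⟩
  have hu : (u + u) / 2 = u := by ring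
  rw [hu, Real.exp_add]
  have key : 0 ≤ (Real.exp u - 1) * ((u - 2) * Real.exp u + u + 2) := by
    rcases le_total 0 u with h | h
    · have h1 := monotone_sub_two_mul_exp h
      norm_num at h1
      exact mul_nonneg (by simpa using h) (by linarith)
    · have h1 := monotone_sub_two_mul_exp h
      norm_num at h1
      exact mul_nonneg_of_nonpos_of_nonpos (by simpa using h) (by linarith)
  linarith
end
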